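/- Under the hypotheses of the previous localized identity, with η supported in {|x| ≥ ρ/2} ∩ {|x| ≤ (1−δ/2)φ(x)}, η = 1 on U_{ρ,δ} = {ρ < |x| < (1−δ)φ(x)}, and λ < 0, one has −λ ∫_Ω η φ² dx ≤ 4μρ^{-2}(1 − (1−δ/2)^{n-2})^{-2} + (1/2)‖Δη‖_{L^∞(Ω)}. In particular, if λ = λ_1^ε → −∞ as ε → 0, then ∫_{U_{ρ,δ}} (φ_1^ε)² dx → 0. -/

import Mathlib

open MeasureTheory Filter

/-- The Laplacian of a scalar function on `ℝⁿ`, as the trace of the second derivative. -/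
noncomputable def lap {n : ℕ} (f : EuclideanSpace ℝ (Fin n) → ℝ)
    (x : EuclideanSpace ℝ (Fin n)) : ℝ :=
  ∑ i : Fin n,
    fderiv ℝ (fun y => fderiv ℝ f y (EuclideanSpace.single i 1)) x (EuclideanSpace.single i 1)

/-- Symmetry of the pure second derivative under integration against a compactly supported factor. -/
lemma second_deriv_symm {n : ℕ} (η g : EuclideanSpace ℝ (Fin n) → ℝ)
    (hη : ContDiff ℝ 2 η) (hg : ContDiff ℝ 2 g) (hc : HasCompactSupport η)
    (v : EuclideanSpace ℝ (Fin n)) :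
    (∫ x, η x * fderiv ℝ (fun y => fderiv ℝ g y v) x v)
      = ∫ x, fderiv ℝ (fun y => fderiv ℝ η y v) x v * g x := by
  have hη1 : ContDiff ℝ 1 (fun y => fderiv ℝ η y v) :=
    (hη.fderiv_right (m := 1) (by norm_num)).clm_apply contDiff_const
  have hg1 : ContDiff ℝ 1 (fun y => fderiv ℝ g y v) :=
    (hg.fderiv_right (m := 1) (by norm_num)).clm_apply contDiff_const
  have hη2 : Continuous (fun x => fderiv ℝ (fun y => fderiv ℝ η y v) x v) :=
    (hη1.continuous_fderiv (by norm_num)).clm_apply continuous_const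
  have hg2 : Continuous (fun x => fderiv ℝ (fun y => fderiv ℝ g y v) x v) :=
    (hg1.continuous_fderiv (by norm_num)).clm_apply continuous_const
  have hc1 : HasCompactSupport (fun y => fderiv ℝ η y v) := hc.fderiv_apply (𝕜 := ℝ) v
  have hc2 : HasCompactSupport (fun x => fderiv ℝ (fun y => fderiv ℝ η y v) x v) :=
    hc1.fderiv_apply (𝕜 := ℝ) v
  have e1 := integral_mul_fderiv_eq_neg_fderiv_mul_of_integrable (μ := volume) (v := v)
    (f := η) (g := fun y => fderiv ℝ g y v)
    ((hη1.continuous.mul hg1.continuous).integrable_of_hasCompactSupport hc1.mul_right)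
    ((hη.continuous.mul hg2).integrable_of_hasCompactSupport hc.mul_right)
    ((hη.continuous.mul hg1.continuous).integrable_of_hasCompactSupport hc.mul_right)
    (fun x _ => hη.differentiable (by norm_num) x) (fun x _ => hg1.differentiable (by norm_num) x)
  have e2 := integral_mul_fderiv_eq_neg_fderiv_mul_of_integrable (μ := volume) (v := v)
    (f := fun y => fderiv ℝ η y v) (g := g)
    ((hη2.mul hg.continuous).integrable_of_hasCompactSupport hc2.mul_right)
    ((hη1.continuous.mul hg1.continuous).integrable_of_hasCompactSupport hc1.mul_right)
    ((hη1.continuous.mul hg.continuous).integrable_of_hasCompactSupport hc1.mul_right)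
    (fun x _ => hη1.differentiable (by norm_num) x) (fun x _ => hg.differentiable (by norm_num) x)
  rw [e1, e2, neg_neg]

lemma lap_continuous {n : ℕ} (g : EuclideanSpace ℝ (Fin n) → ℝ) (hg : ContDiff ℝ 2 g) :
    Continuous (lap g) := by
  unfold lap
  refine continuous_finsetSum _ fun i _ => ?_
  have hg1 : ContDiff ℝ 1 (fun y => fderiv ℝ g y (EuclideanSpace.single i 1)) :=
    (hg.fderiv_right (m := 1) (by norm_num)).clm_apply contDiff_const
  exact (hg1.continuous_fderiv (by norm_num)).clm_apply continuous_const

lemma lap_zero_of_notMem {n : ℕ} (η : EuclideanSpace ℝ (Fin n) → ℝ)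
    (x : EuclideanSpace ℝ (Fin n)) (hx : x ∉ tsupport η) : lap η x = 0 := by
  unfold lap
  refine Finset.sum_eq_zero fun i _ => ?_
  have h0 : η =ᶠ[nhds x] 0 := notMem_tsupport_iff_eventuallyEq.mp hx
  have h1 : (fun y => fderiv ℝ η y (EuclideanSpace.single i 1)) =ᶠ[nhds x] fun _ => 0 := by
    filter_upwards [h0.fderiv (𝕜 := ℝ)] with y hy
    rw [hy]; simp
  rw [h1.fderiv_eq]; simp

lemma green {n : ℕ} (η g : EuclideanSpace ℝ (Fin n) → ℝ)
    (hη : ContDiff ℝ 2 η) (hg : ContDiff ℝ 2 g) (hc : HasCompactSupport η) :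
    (∫ x, η x * lap g x) = ∫ x, lap η x * g x := by
  unfold lap
  simp only [Finset.mul_sum, Finset.sum_mul]
  have hη1 : ∀ v, ContDiff ℝ 1 (fun y => fderiv ℝ η y v) := fun v =>
    (hη.fderiv_right (m := 1) (by norm_num)).clm_apply contDiff_const
  have hg1 : ∀ v, ContDiff ℝ 1 (fun y => fderiv ℝ g y v) := fun v =>
    (hg.fderiv_right (m := 1) (by norm_num)).clm_apply contDiff_const
  have hc1 : ∀ v, HasCompactSupport (fun y => fderiv ℝ η y v) :=
    fun v => hc.fderiv_apply (𝕜 := ℝ) v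
  rw [integral_finsetSum, integral_finsetSum]
  · exact Finset.sum_congr rfl fun i _ => second_deriv_symm η g hη hg hc _
  · intro i _
    exact ((((hη1 _).continuous_fderiv (by norm_num)).clm_apply
      continuous_const).mul hg.continuous).integrable_of_hasCompactSupport
        ((hc1 _).fderiv_apply (𝕜 := ℝ) _).mul_right
  · intro i _
    exact (hη.continuous.mul (((hg1 _).continuous_fderiv (by norm_num)).clm_apply
      continuous_const)).integrable_of_hasCompactSupport hc.mul_right

lemma lap_sq_ge {n : ℕ} (f : EuclideanSpace ℝ (Fin n) → ℝ) (hf : ContDiff ℝ 2 f)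
    (x : EuclideanSpace ℝ (Fin n)) :
    2 * (f x * lap f x) ≤ lap (fun y => f y ^ 2) x := by
  unfold lap
  rw [Finset.mul_sum, Finset.mul_sum]
  refine Finset.sum_le_sum fun i _ => ?_
  set v : EuclideanSpace ℝ (Fin n) := EuclideanSpace.single i 1
  have hd : Differentiable ℝ f := hf.differentiable (by norm_num)
  have hf1 : ContDiff ℝ 1 (fun y => fderiv ℝ f y v) :=
    (hf.fderiv_right (m := 1) (by norm_num)).clm_apply contDiff_const
  have hd1 := hf1.differentiable (by norm_num)
  have e : (fun y => fderiv ℝ (fun y => f y ^ 2) y v) = fun y => (2 * f y) * fderiv ℝ f y v := by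
    funext y
    rw [((hd y).hasFDerivAt.pow 2).fderiv]
    simp
  have e2 : fderiv ℝ (fun y => (2 * f y) * fderiv ℝ f y v) x = _ :=
    (((hd x).hasFDerivAt.const_mul 2).mul (hd1 x).hasFDerivAt).fderiv
  rw [e, e2]
  simp only [add_apply, smul_apply, ContinuousLinearMap.add_apply, ContinuousLinearMap.smul_apply, smul_eq_mul]
  nlinarith [sq_nonneg (fderiv ℝ f x v)]

lemma psi_bound {n : ℕ} (hn : 3 ≤ n) (ρ δ ε r p : ℝ) (hρ : 0 < ρ) (hδ : δ ∈ Set.Ioo (0:ℝ) 1)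
    (hε : 0 < ε) (hp : 0 < p) (h1 : ρ / 2 ≤ r) (h2 : r ≤ (1 - δ / 2) * p) :
    (r + ε) ^ (-2 : ℝ) * (1 + ε - r ^ ((n : ℝ) - 2) * p ^ ((2 : ℝ) - n)) ^ (-2 : ℝ)
      ≤ 4 * ρ ^ (-2 : ℝ) * (1 - (1 - δ / 2) ^ ((n : ℝ) - 2)) ^ (-2 : ℝ) := by
  obtain ⟨hδ0, hδ1⟩ := hδ
  have hn' : (3 : ℝ) ≤ n := by exact_mod_cast hn
  have hr : 0 < r := by linarith
  have ht : r ^ ((n : ℝ) - 2) * p ^ ((2 : ℝ) - n) = (r / p) ^ ((n : ℝ) - 2) := by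
    rw [Real.div_rpow hr.le hp.le, show (2 : ℝ) - n = -((n : ℝ) - 2) by ring,
      Real.rpow_neg hp.le, div_eq_mul_inv]
  have htle : (r / p) ^ ((n : ℝ) - 2) ≤ (1 - δ / 2) ^ ((n : ℝ) - 2) := by
    refine Real.rpow_le_rpow (by positivity) ?_ (by linarith)
    rwa [div_le_iff₀ hp]
  have hlt : (1 - δ / 2) ^ ((n : ℝ) - 2) < 1 :=
    Real.rpow_lt_one (by linarith) (by linarith) (by linarith)
  have hA : (r + ε) ^ (-2 : ℝ) ≤ 4 * ρ ^ (-2 : ℝ) := by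
    have : (r + ε) ^ (-2 : ℝ) ≤ (ρ / 2) ^ (-2 : ℝ) :=
      Real.rpow_le_rpow_of_nonpos (by linarith) (by linarith) (by norm_num)
    refine this.trans (le_of_eq ?_)
    rw [Real.div_rpow hρ.le (by norm_num), Real.rpow_neg (by norm_num : (0:ℝ) ≤ 2)]
    norm_num
    ring
  rw [ht]
  refine mul_le_mul hA ?_ (Real.rpow_nonneg (by linarith) _) (by positivity)
  exact Real.rpow_le_rpow_of_nonpos (by linarith) (by linarith) (by norm_num)

/-- Concentration estimate (Proposition 1, (21)): for the normalized first eigenfunctions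
`φ₁^ε` of `−Δ − μΨ_ε` on `Ω = {|x| < φ(x)}`, with `η` a cutoff equal to `1` on
`U_{ρ,δ} = {ρ < |x| < (1−δ)φ(x)}` and supported in `{ρ/2 ≤ |x| ≤ (1−δ/2)φ(x)}`,
one has `−λ₁^ε ∫ η (φ₁^ε)² ≤ 4μρ⁻²(1 − (1−δ/2)^{n-2})⁻² + (1/2)‖Δη‖_∞`; in
particular, if `λ₁^ε → −∞` as `ε → 0⁺`, then `∫_{U_{ρ,δ}} (φ₁^ε)² → 0`. -/
theorem eigenfunction_concentration {n : ℕ} (hn : 3 ≤ n)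
    (ρ δ : ℝ) (hρ : 0 < ρ) (hδ : δ ∈ Set.Ioo (0:ℝ) 1)
    (φf : EuclideanSpace ℝ (Fin n) → ℝ)
    (hφpos : ∀ x, 0 < φf x)
    (hφhom : ∀ c : ℝ, 0 < c → ∀ x, φf (c • x) = φf x)
    (μ : ℝ) (hμ : (((n : ℝ) - 2) / 2) ^ 2 < μ)
    (lam : ℝ → ℝ) (Φ : ℝ → EuclideanSpace ℝ (Fin n) → ℝ)
    (η : EuclideanSpace ℝ (Fin n) → ℝ) (hη : ContDiff ℝ (⊤ : ℕ∞) η)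
    (hηcs : HasCompactSupport η)
    (hη01 : ∀ x, η x ∈ Set.Icc (0:ℝ) 1)
    (hηsupp : tsupport η ⊆
      {x : EuclideanSpace ℝ (Fin n) | ρ / 2 ≤ ‖x‖ ∧ ‖x‖ ≤ (1 - δ / 2) * φf x})
    (hηone : ∀ x : EuclideanSpace ℝ (Fin n), ρ < ‖x‖ → ‖x‖ < (1 - δ) * φf x → η x = 1)
    (K : ℝ) (hK : ∀ x, |lap η x| ≤ K)
    (hΦ : ∀ ε : ℝ, 0 < ε → ContDiff ℝ 2 (Φ ε))
    (hnorm : ∀ ε : ℝ, 0 < ε →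
      (∫ x in {x : EuclideanSpace ℝ (Fin n) | ‖x‖ < φf x}, (Φ ε x) ^ 2) = 1)
    (hlamneg : ∀ ε : ℝ, 0 < ε → lam ε < 0)
    (heig : ∀ ε : ℝ, 0 < ε →
      ∀ x : EuclideanSpace ℝ (Fin n), ‖x‖ < φf x →
        -lap (Φ ε) x
          - μ * ((‖x‖ + ε) ^ (-2 : ℝ)
              * (1 + ε - ‖x‖ ^ ((n : ℝ) - 2) * (φf x) ^ ((2 : ℝ) - n)) ^ (-2 : ℝ)) * Φ ε x
          = lam ε * Φ ε x) :
    (∀ ε : ℝ, 0 < ε →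
      -(lam ε) * ∫ x in {x : EuclideanSpace ℝ (Fin n) | ‖x‖ < φf x}, η x * (Φ ε x) ^ 2
        ≤ 4 * μ * ρ ^ (-2 : ℝ) * (1 - (1 - δ / 2) ^ ((n : ℝ) - 2)) ^ (-2 : ℝ)
          + (1 / 2) * K)
    ∧ (Tendsto lam (nhdsWithin 0 (Set.Ioi (0:ℝ))) atBot →
        Tendsto (fun ε =>
            ∫ x in {x : EuclideanSpace ℝ (Fin n) | ρ < ‖x‖ ∧ ‖x‖ < (1 - δ) * φf x},
              (Φ ε x) ^ 2)
          (nhdsWithin 0 (Set.Ioi (0:ℝ))) (nhds 0)) := by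
  have hμ0 : 0 < μ := lt_of_le_of_lt (sq_nonneg _) hμ
  have hK0 : 0 ≤ K := (abs_nonneg _).trans (hK 0)
  have hη2 : ContDiff ℝ 2 η := contDiff_infty.mp hη 2
  set Ω : Set (EuclideanSpace ℝ (Fin n)) := {x | ‖x‖ < φf x} with hΩ
  set C : ℝ := 4 * ρ ^ (-2 : ℝ) * (1 - (1 - δ / 2) ^ ((n : ℝ) - 2)) ^ (-2 : ℝ) with hC
  have hC0 : 0 ≤ C := by
    have hlt : (1 - δ / 2) ^ ((n : ℝ) - 2) ≤ 1 := by
      have hn' : (3 : ℝ) ≤ n := by exact_mod_cast hn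
      exact Real.rpow_le_one (by linarith [hδ.2]) (by linarith [hδ.1]) (by linarith)
    have := Real.rpow_nonneg (sub_nonneg.mpr hlt) (-2)
    positivity
  have hsub : tsupport η ⊆ Ω := by
    intro x hx
    have := (hηsupp hx).2
    have hp := hφpos x
    show ‖x‖ < φf x
    nlinarith [hδ.1]
  have hηz : ∀ x, x ∉ tsupport η → η x = 0 := fun x hx => image_eq_zero_of_notMem_tsupport hx
  have hint : ∀ ε : ℝ, 0 < ε → Integrable (fun x => (Φ ε x) ^ 2) (volume.restrict Ω) := by
    intro ε hε
    by_contra h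
    have := hnorm ε hε
    rw [integral_undef h] at this
    exact zero_ne_one this
  have hfull : ∀ ε : ℝ, ∫ x in Ω, η x * (Φ ε x) ^ 2 = ∫ x, η x * (Φ ε x) ^ 2 := by
    intro ε
    refine setIntegral_eq_integral_of_forall_compl_eq_zero fun x hx => ?_
    rw [hηz x fun h => hx (hsub h), zero_mul]
  have hintη : ∀ ε : ℝ, 0 < ε → Integrable (fun x => η x * (Φ ε x) ^ 2) := fun ε hε =>
    (hη2.continuous.mul ((hΦ ε hε).continuous.pow 2)).integrable_of_hasCompactSupport
      hηcs.mul_right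
  have main : ∀ ε : ℝ, 0 < ε → -(lam ε) * ∫ x in Ω, η x * (Φ ε x) ^ 2 ≤ μ * C + (1 / 2) * K := by
    intro ε hε
    have hsq : ContDiff ℝ 2 (fun x => Φ ε x ^ 2) := (hΦ ε hε).pow 2
    have hle1 : ∫ x in Ω, η x * (Φ ε x) ^ 2 ≤ 1 := by
      rw [← hnorm ε hε]
      refine integral_mono (hintη ε hε).integrableOn (hint ε hε) fun x => ?_
      exact mul_le_of_le_one_left (sq_nonneg _) (hη01 x).2
    have hlap : ∫ x, lap η x * Φ ε x ^ 2 ≤ K := by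
      have e : ∫ x in Ω, lap η x * Φ ε x ^ 2 = ∫ x, lap η x * Φ ε x ^ 2 := by
        refine setIntegral_eq_integral_of_forall_compl_eq_zero fun x hx => ?_
        rw [lap_zero_of_notMem η x fun h => hx (hsub h), zero_mul]
      have hcl : HasCompactSupport (lap η) :=
        HasCompactSupport.intro hηcs fun x hx => lap_zero_of_notMem η x hx
      have hi : Integrable (fun x => lap η x * Φ ε x ^ 2) :=
        ((lap_continuous η hη2).mul hsq.continuous).integrable_of_hasCompactSupport hcl.mul_right
      rw [← e]
      calc ∫ x in Ω, lap η x * Φ ε x ^ 2 ≤ ∫ x in Ω, K * Φ ε x ^ 2 := by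
            refine integral_mono hi.integrableOn ((hint ε hε).const_mul K) fun x => ?_
            exact mul_le_mul_of_nonneg_right ((le_abs_self _).trans (hK x)) (sq_nonneg _)
        _ = K := by rw [integral_const_mul, hnorm ε hε, mul_one]
    have hi1 : Integrable (fun x => η x * lap (fun y => Φ ε y ^ 2) x) :=
      (hη2.continuous.mul (lap_continuous _ hsq)).integrable_of_hasCompactSupport hηcs.mul_right
    have hpt : ∀ x, -(lam ε) * (η x * (Φ ε x) ^ 2)
        ≤ (1 / 2) * (η x * lap (fun y => Φ ε y ^ 2) x) + (μ * C) * (η x * (Φ ε x) ^ 2) := by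
      intro x
      by_cases hx : x ∈ tsupport η
      · have he := heig ε hε x (hsub hx)
        have hb := psi_bound hn ρ δ ε ‖x‖ (φf x) hρ hδ hε (hφpos x) (hηsupp hx).1 (hηsupp hx).2
        rw [← hC] at hb
        set P := (‖x‖ + ε) ^ (-2 : ℝ)
              * (1 + ε - ‖x‖ ^ ((n : ℝ) - 2) * (φf x) ^ ((2 : ℝ) - n)) ^ (-2 : ℝ)
        have hη0 := (hη01 x).1
        have h1 := mul_le_mul_of_nonneg_left (lap_sq_ge (Φ ε) (hΦ ε hε) x) hη0
        have h2 : μ * P * (η x * Φ ε x ^ 2) ≤ μ * C * (η x * Φ ε x ^ 2) :=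
          mul_le_mul_of_nonneg_right (mul_le_mul_of_nonneg_left hb hμ0.le) (by positivity)
        have h3 : -(lam ε) * (η x * (Φ ε x) ^ 2)
            = η x * (Φ ε x * lap (Φ ε) x) + μ * P * (η x * Φ ε x ^ 2) := by
          linear_combination η x * Φ ε x * he
        linarith
      · rw [hηz x hx]; simp
    have hI := integral_mono ((hintη ε hε).const_mul (-(lam ε)))
      ((hi1.const_mul (1 / 2)).add ((hintη ε hε).const_mul (μ * C))) hpt
    simp only [Pi.add_apply] at hI
    rw [integral_add (hi1.const_mul (1 / 2)) ((hintη ε hε).const_mul (μ * C)),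
      integral_const_mul, integral_const_mul, integral_const_mul,
      green η _ hη2 hsq hηcs, ← hfull ε] at hI
    have := mul_le_mul_of_nonneg_left hle1 (mul_nonneg hμ0.le hC0)
    linarith
  refine ⟨fun ε hε => ?_, fun hlim => ?_⟩
  · refine (main ε hε).trans (le_of_eq ?_)
    rw [hC]; ring
  · have hub : ∀ ε : ℝ, 0 < ε →
        ∫ x in {x : EuclideanSpace ℝ (Fin n) | ρ < ‖x‖ ∧ ‖x‖ < (1 - δ) * φf x}, (Φ ε x) ^ 2
          ≤ (μ * C + (1 / 2) * K) / (-(lam ε)) := by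
      intro ε hε
      rw [le_div_iff₀ (by linarith [hlamneg ε hε]), mul_comm]
      refine (mul_le_mul_of_nonneg_left ?_ (by linarith [hlamneg ε hε])).trans (main ε hε)
      rw [hfull ε]
      have hSm : MeasurableSet (η ⁻¹' {1}) := hη2.continuous.measurable (measurableSet_singleton 1)
      have hSint : IntegrableOn (fun x => Φ ε x ^ 2) (η ⁻¹' {1}) := by
        refine (((hΦ ε hε).continuous.pow 2).continuousOn.integrableOn_compact
          hηcs.isCompact).mono_set fun x hx => subset_tsupport η ?_
        have : η x = 1 := hx
        simp [this]
      calc _ ≤ ∫ x in η ⁻¹' {1}, Φ ε x ^ 2 := by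
            refine setIntegral_mono_set hSint (ae_of_all _ fun x => sq_nonneg _) ?_
            exact HasSubset.Subset.eventuallyLE fun x hx => hηone x hx.1 hx.2
        _ = ∫ x in η ⁻¹' {1}, η x * Φ ε x ^ 2 := by
            refine setIntegral_congr_fun hSm fun x hx => ?_
            have : η x = 1 := hx
            simp [this]
        _ ≤ ∫ x, η x * Φ ε x ^ 2 :=
            setIntegral_le_integral (hintη ε hε)
              (ae_of_all _ fun x => mul_nonneg (hη01 x).1 (sq_nonneg _))
    refine tendsto_of_tendsto_of_tendsto_of_le_of_le' tendsto_const_nhds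
      ((tendsto_neg_atBot_atTop.comp hlim).const_div_atTop (μ * C + (1 / 2) * K)) ?_ ?_
    · exact Eventually.of_forall fun ε => integral_nonneg fun x => sq_nonneg _
    · filter_upwards [self_mem_nhdsWithin] with ε hε
      exact hub ε hε
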